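/- Let G be a finite abelian group and k a field. Then the Frobenius dimension of the group algebra k[G] equals the order of G: Frobdim(k[G]) = |G|. -/

import Mathlib

open TensorProduct

/-- A nearly Frobenius coproduct on a `k`-algebra `A`. -/
def IsNearlyFrobenius (k A : Type*) [Field k] [Ring A] [Algebra k A]
    (Δ : A →ₗ[k] A ⊗[k] A) : Prop :=
  ∀ a b : A, Δ (a * b) = (a ⊗ₜ[k] (1 : A)) * Δ b ∧ Δ (a * b) = Δ a * ((1 : A) ⊗ₜ[k] b)

/-- The Frobenius space of an algebra. -/
def FrobeniusSpace (k A : Type*) [Field k] [Ring A] [Algebra k A] :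
    Submodule k (A →ₗ[k] A ⊗[k] A) where
  carrier := {Δ | IsNearlyFrobenius k A Δ}
  add_mem' := by
    intro Δ₁ Δ₂ h₁ h₂ a b
    refine ⟨?_, ?_⟩
    · simp only [LinearMap.add_apply, (h₁ a b).1, (h₂ a b).1, mul_add]
    · simp only [LinearMap.add_apply, (h₁ a b).2, (h₂ a b).2, add_mul]
  zero_mem' := by
    intro a b
    simp
  smul_mem' := by
    intro c Δ h a b
    refine ⟨?_, ?_⟩
    · simp only [LinearMap.smul_apply, (h a b).1, Algebra.mul_smul_comm]
    · simp only [LinearMap.smul_apply, (h a b).2, Algebra.smul_mul_assoc]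

/-!
Evaluation at `1` identifies nearly Frobenius coproducts with the tensors `t` satisfying
`(a ⊗ 1) t = t (1 ⊗ a)` for all `a`. If `A` carries a linear form `ε` with dual bases `x`, `y`,
then `ε ⊗ id` maps these tensors bijectively onto `A`, the inverse being
`c ↦ (1 ⊗ c) ∑ x i ⊗ y i`. In a group algebra the coefficient of `1` is such a form, with dual
bases `g` and `g⁻¹`.
-/

section CasimirTensors

variable (k A : Type*) [CommSemiring k] [Semiring A] [Algebra k A]

/-- The tensors `t` with `(a ⊗ 1) t = t (1 ⊗ a)` for all `a`, often called Casimir elements. They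
are the possible values at `1` of a nearly Frobenius coproduct. -/
def casimirSubmodule : Submodule k (A ⊗[k] A) where
  carrier := {t | ∀ a : A, a ⊗ₜ[k] (1 : A) * t = t * (1 : A) ⊗ₜ[k] a}
  add_mem' hs ht a := by rw [mul_add, add_mul, hs a, ht a]
  zero_mem' a := by rw [mul_zero, zero_mul]
  smul_mem' r t ht a := by rw [mul_smul_comm, smul_mul_assoc, ht a]

variable {k A}

theorem mem_casimirSubmodule {t : A ⊗[k] A} :
    t ∈ casimirSubmodule k A ↔ ∀ a : A, a ⊗ₜ[k] (1 : A) * t = t * (1 : A) ⊗ₜ[k] a :=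
  Iff.rfl

theorem one_tmul_mul_mem_casimirSubmodule (c : A) {t : A ⊗[k] A} (ht : t ∈ casimirSubmodule k A) :
    (1 : A) ⊗ₜ[k] c * t ∈ casimirSubmodule k A := fun a ↦ calc
  a ⊗ₜ[k] (1 : A) * ((1 : A) ⊗ₜ[k] c * t) = (1 : A) ⊗ₜ[k] c * (a ⊗ₜ[k] (1 : A) * t) := by
    simp only [← mul_assoc, Algebra.TensorProduct.tmul_mul_tmul, one_mul, mul_one]
  _ = (1 : A) ⊗ₜ[k] c * t * (1 : A) ⊗ₜ[k] a := by
    rw [mem_casimirSubmodule.1 ht a, mul_assoc]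

/-- The left `A`-linear map `a ↦ (a ⊗ 1) t` with value `t` at `1`. It is the nearly Frobenius
coproduct belonging to `t` when `t` is a Casimir tensor. -/
noncomputable def coproductOfTensor (t : A ⊗[k] A) : A →ₗ[k] A ⊗[k] A :=
  LinearMap.mulRight k t ∘ₗ (Algebra.TensorProduct.includeLeft : A →ₐ[k] A ⊗[k] A).toLinearMap

theorem coproductOfTensor_apply (t : A ⊗[k] A) (a : A) :
    coproductOfTensor t a = a ⊗ₜ[k] (1 : A) * t :=
  rfl

end CasimirTensors

section NearlyFrobenius

variable {k A : Type*} [Field k] [Ring A] [Algebra k A]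

theorem IsNearlyFrobenius.tmul_one_mul_apply_one {Δ : A →ₗ[k] A ⊗[k] A}
    (hΔ : IsNearlyFrobenius k A Δ) (a : A) : a ⊗ₜ[k] (1 : A) * Δ 1 = Δ a := by
  rw [← (hΔ a 1).1, mul_one]

theorem IsNearlyFrobenius.apply_one_mul_one_tmul {Δ : A →ₗ[k] A ⊗[k] A}
    (hΔ : IsNearlyFrobenius k A Δ) (a : A) : Δ 1 * (1 : A) ⊗ₜ[k] a = Δ a := by
  rw [← (hΔ 1 a).2, one_mul]

theorem IsNearlyFrobenius.apply_one_mem_casimirSubmodule {Δ : A →ₗ[k] A ⊗[k] A}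
    (hΔ : IsNearlyFrobenius k A Δ) : Δ 1 ∈ casimirSubmodule k A := fun a ↦
  (hΔ.tmul_one_mul_apply_one a).trans (hΔ.apply_one_mul_one_tmul a).symm

theorem isNearlyFrobenius_coproductOfTensor {t : A ⊗[k] A} (ht : t ∈ casimirSubmodule k A) :
    IsNearlyFrobenius k A (coproductOfTensor t) := by
  intro a b
  have tmul_one_mul : (a * b) ⊗ₜ[k] (1 : A) = a ⊗ₜ[k] (1 : A) * b ⊗ₜ[k] (1 : A) := by
    rw [Algebra.TensorProduct.tmul_mul_tmul, one_mul]
  simp only [coproductOfTensor_apply, tmul_one_mul]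
  exact ⟨mul_assoc _ _ _, by rw [mul_assoc, mem_casimirSubmodule.1 ht b, mul_assoc]⟩

/-- Evaluation at `1`, as an equivalence between nearly Frobenius coproducts and Casimir
tensors. -/
noncomputable def frobeniusSpaceEquivCasimir :
    FrobeniusSpace k A ≃ₗ[k] casimirSubmodule k A where
  toFun Δ := ⟨Δ.1 1, Δ.2.apply_one_mem_casimirSubmodule⟩
  map_add' _ _ := rfl
  map_smul' _ _ := rfl
  invFun t := ⟨coproductOfTensor t.1, isNearlyFrobenius_coproductOfTensor t.2⟩
  left_inv Δ := Subtype.ext <| LinearMap.ext Δ.2.tmul_one_mul_apply_one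
  right_inv t := Subtype.ext <| one_mul t.1

end NearlyFrobenius

section LeftSlice

variable {k M : Type*} [CommSemiring k] [AddCommMonoid M] [Module k M]

/-- The slice map `x ⊗ y ↦ ε x • y` of a linear form `ε`. -/
noncomputable def leftSlice (N : Type*) [AddCommMonoid N] [Module k N] (ε : M →ₗ[k] k) :
    M ⊗[k] N →ₗ[k] N :=
  (TensorProduct.lid k N).toLinearMap ∘ₗ ε.rTensor N

theorem leftSlice_tmul {N : Type*} [AddCommMonoid N] [Module k N] (ε : M →ₗ[k] k) (x : M) (y : N) :
    leftSlice N ε (x ⊗ₜ[k] y) = ε x • y :=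
  rfl

variable {A B : Type*} [Semiring A] [Algebra k A] [Semiring B] [Algebra k B]

theorem leftSlice_mul_one_tmul (ε : A →ₗ[k] k) (t : A ⊗[k] B) (b : B) :
    leftSlice B ε (t * (1 : A) ⊗ₜ[k] b) = leftSlice B ε t * b := by
  induction t with
  | zero => simp only [zero_mul, map_zero]
  | tmul x y =>
    rw [Algebra.TensorProduct.tmul_mul_tmul, mul_one, leftSlice_tmul, leftSlice_tmul,
      smul_mul_assoc]
  | add s t hs ht => rw [add_mul, map_add, map_add, add_mul, hs, ht]

theorem leftSlice_one_tmul_mul (ε : A →ₗ[k] k) (b : B) (t : A ⊗[k] B) :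
    leftSlice B ε ((1 : A) ⊗ₜ[k] b * t) = b * leftSlice B ε t := by
  induction t with
  | zero => simp only [mul_zero, map_zero]
  | tmul x y =>
    rw [Algebra.TensorProduct.tmul_mul_tmul, one_mul, leftSlice_tmul, leftSlice_tmul,
      mul_smul_comm]
  | add s t hs ht => rw [mul_add, map_add, map_add, mul_add, hs, ht]

end LeftSlice

section FrobeniusSystem

/-- A Frobenius system on `A`: a linear form `ε` together with finite families `x` and `y` that
are dual to each other for the bilinear form `(a, b) ↦ ε (a * b)`. An algebra admitting one is a
Frobenius algebra. -/
structure IsFrobeniusSystem {k A ι : Type*} [CommSemiring k] [Semiring A] [Algebra k A] [Fintype ι]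
    (ε : A →ₗ[k] k) (x y : ι → A) : Prop where
  sum_smul_left (a : A) : ∑ i, ε (y i * a) • x i = a
  sum_smul_right (a : A) : ∑ i, ε (a * x i) • y i = a

namespace IsFrobeniusSystem

variable {k A ι : Type*} [CommSemiring k] [Semiring A] [Algebra k A] [Fintype ι]
  {ε : A →ₗ[k] k} {x y : ι → A}

theorem sum_tmul_mem_casimirSubmodule (h : IsFrobeniusSystem ε x y) :
    ∑ i, x i ⊗ₜ[k] y i ∈ casimirSubmodule k A := fun a ↦ calc
  a ⊗ₜ[k] (1 : A) * ∑ i, x i ⊗ₜ[k] y i = ∑ i, (a * x i) ⊗ₜ[k] y i := by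
    simp only [Finset.mul_sum, Algebra.TensorProduct.tmul_mul_tmul, one_mul]
  _ = ∑ i, ∑ j, (ε (y j * (a * x i)) • x j) ⊗ₜ[k] y i := by
    simp only [← sum_tmul, h.sum_smul_left]
  _ = ∑ j, ∑ i, x j ⊗ₜ[k] (ε (y j * a * x i) • y i) := by
    rw [Finset.sum_comm]
    simp only [smul_tmul, mul_assoc]
  _ = ∑ j, x j ⊗ₜ[k] (y j * a) := by
    simp only [← tmul_sum, h.sum_smul_right]
  _ = (∑ j, x j ⊗ₜ[k] y j) * (1 : A) ⊗ₜ[k] a := by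
    simp only [Finset.sum_mul, Algebra.TensorProduct.tmul_mul_tmul, mul_one]

theorem leftSlice_sum_tmul (h : IsFrobeniusSystem ε x y) :
    leftSlice A ε (∑ i, x i ⊗ₜ[k] y i) = 1 := by
  simpa only [map_sum, leftSlice_tmul, one_mul] using h.sum_smul_right 1

theorem sum_tmul_leftSlice (h : IsFrobeniusSystem ε x y) {B : Type*} [Semiring B] [Algebra k B]
    (t : A ⊗[k] B) :
    ∑ i, x i ⊗ₜ[k] leftSlice B ε (y i ⊗ₜ[k] (1 : B) * t) = t := by
  induction t with
  | zero => simp only [mul_zero, map_zero, tmul_zero, Finset.sum_const_zero]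
  | tmul a b =>
    simp only [Algebra.TensorProduct.tmul_mul_tmul, one_mul, leftSlice_tmul, ← smul_tmul,
      ← sum_tmul, h.sum_smul_left]
  | add s t hs ht => simp only [mul_add, map_add, tmul_add, Finset.sum_add_distrib, hs, ht]

theorem one_tmul_leftSlice_mul_sum_tmul (h : IsFrobeniusSystem ε x y) {t : A ⊗[k] A}
    (ht : t ∈ casimirSubmodule k A) :
    (1 : A) ⊗ₜ[k] leftSlice A ε t * ∑ i, x i ⊗ₜ[k] y i = t := calc
  (1 : A) ⊗ₜ[k] leftSlice A ε t * ∑ i, x i ⊗ₜ[k] y i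
      = ∑ i, x i ⊗ₜ[k] (leftSlice A ε t * y i) := by
    simp only [Finset.mul_sum, Algebra.TensorProduct.tmul_mul_tmul, one_mul]
  _ = ∑ i, x i ⊗ₜ[k] leftSlice A ε (y i ⊗ₜ[k] (1 : A) * t) := by
    simp only [mem_casimirSubmodule.1 ht, leftSlice_mul_one_tmul]
  _ = t := h.sum_tmul_leftSlice t

/-- The slice map of `ε`, as an equivalence between Casimir tensors and `A`. -/
noncomputable def casimirEquiv (h : IsFrobeniusSystem ε x y) : casimirSubmodule k A ≃ₗ[k] A where
  __ := leftSlice A ε ∘ₗ (casimirSubmodule k A).subtype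
  invFun c := ⟨(1 : A) ⊗ₜ[k] c * ∑ i, x i ⊗ₜ[k] y i,
    one_tmul_mul_mem_casimirSubmodule c h.sum_tmul_mem_casimirSubmodule⟩
  left_inv t := Subtype.ext <| h.one_tmul_leftSlice_mul_sum_tmul t.2
  right_inv c := show leftSlice A ε ((1 : A) ⊗ₜ[k] c * ∑ i, x i ⊗ₜ[k] y i) = c by
    rw [leftSlice_one_tmul_mul, h.leftSlice_sum_tmul, mul_one]

end IsFrobeniusSystem

theorem IsFrobeniusSystem.finrank_frobeniusSpace {k A ι : Type*} [Field k] [Ring A] [Algebra k A]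
    [Fintype ι] {ε : A →ₗ[k] k} {x y : ι → A} (h : IsFrobeniusSystem ε x y) :
    Module.finrank k (FrobeniusSpace k A) = Module.finrank k A :=
  (frobeniusSpaceEquivCasimir.trans h.casimirEquiv).finrank_eq

end FrobeniusSystem

section GroupAlgebra

theorem monoidAlgebra_basis_coord_apply {k M : Type*} [Semiring k] (m : M) (a : MonoidAlgebra k M) :
    (MonoidAlgebra.basis M k).coord m a = a.coeff m :=
  rfl

theorem sum_coeff_smul_of {k M : Type*} [Semiring k] [MulOneClass M] [Fintype M]
    (a : MonoidAlgebra k M) : ∑ m, a.coeff m • MonoidAlgebra.of k M m = a :=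
  (MonoidAlgebra.basis M k).sum_repr a

theorem isFrobeniusSystem_monoidAlgebra (k G : Type*) [CommSemiring k] [Group G] [Fintype G] :
    IsFrobeniusSystem ((MonoidAlgebra.basis G k).coord 1)
      (fun g ↦ MonoidAlgebra.of k G g) (fun g ↦ MonoidAlgebra.of k G g⁻¹) where
  sum_smul_left a := calc
    _ = ∑ g, a.coeff g • MonoidAlgebra.of k G g := by
      simp only [monoidAlgebra_basis_coord_apply, MonoidAlgebra.of_apply,
        MonoidAlgebra.coeff_single_mul_apply, inv_inv, one_mul, mul_one]
    _ = a := sum_coeff_smul_of a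
  sum_smul_right a := calc
    _ = ∑ g, a.coeff g⁻¹ • MonoidAlgebra.of k G g⁻¹ := by
      simp only [monoidAlgebra_basis_coord_apply, MonoidAlgebra.of_apply,
        MonoidAlgebra.coeff_mul_single_apply, one_mul, mul_one]
    _ = ∑ g, a.coeff g • MonoidAlgebra.of k G g :=
      Equiv.sum_comp (Equiv.inv G) fun g ↦ a.coeff g • MonoidAlgebra.of k G g
    _ = a := sum_coeff_smul_of a

end GroupAlgebra

theorem frobdim_monoidAlgebra_abelian_general (k G : Type*) [Field k] [Group G] [Fintype G] :
    Module.finrank k (FrobeniusSpace k (MonoidAlgebra k G)) = Fintype.card G := by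
  rw [(isFrobeniusSystem_monoidAlgebra k G).finrank_frobeniusSpace,
    Module.finrank_eq_card_basis (MonoidAlgebra.basis G k)]

/-- the Frobenius dimension of the group algebra of a finite abelian
group equals the order of the group. -/
theorem frobdim_monoidAlgebra_abelian (k G : Type*) [Field k] [CommGroup G] [Fintype G] :
    Module.finrank k (FrobeniusSpace k (MonoidAlgebra k G)) = Fintype.card G :=
  frobdim_monoidAlgebra_abelian_general k G
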